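/- For every integer n ≥ 2, let A₂ be the set of permutations w of {1,...,n} with w(1) = 2. Then there exists a bijection Ψ₂ from A₂ to A₂ such that for every w ∈ A₂, sign(Ψ₂(w)) = sign(w) and depth(w) = drp(Ψ₂(w)). -/

import Mathlib

open Finset

/-- The one-line notation value of `π` at position `k ∈ {1,…,n}`:
`oneLine π k = π(k)` with `1`-indexed positions and values. -/
def oneLine {n : ℕ} (π : Equiv.Perm (Fin n)) (k : ℕ) : ℕ :=
  if h : k - 1 < n then ((π ⟨k - 1, h⟩ : Fin n) : ℕ) + 1 else k

/-- `SUC(π) = {i ∈ {1,…,n-1} : π(i+1) = π(i)+1}` (position set). -/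
def SUC {n : ℕ} (π : Equiv.Perm (Fin n)) : Finset ℕ :=
  (Finset.Icc 1 (n - 1)).filter (fun i => oneLine π (i + 1) = oneLine π i + 1)

/-- `FIX(π) = {i ∈ {1,…,n-1} : π(i) = i}` (position set). -/
def FIX {n : ℕ} (π : Equiv.Perm (Fin n)) : Finset ℕ :=
  (Finset.Icc 1 (n - 1)).filter (fun i => oneLine π i = i)

/-- `Asc₂(π) = {π(i+1) : i ∈ {1,…,n-1}, π(i+1) ≥ π(i)+2}` (value set). -/
def Asc2 {n : ℕ} (π : Equiv.Perm (Fin n)) : Finset ℕ :=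
  ((Finset.Icc 1 (n - 1)).filter (fun i => oneLine π i + 2 ≤ oneLine π (i + 1))).image
    (fun i => oneLine π (i + 1))

/-- `Des(π) = {π(i+1) : i ∈ {1,…,n-1}, π(i) > π(i+1)}` (value set). -/
def DesSet {n : ℕ} (π : Equiv.Perm (Fin n)) : Finset ℕ :=
  ((Finset.Icc 1 (n - 1)).filter (fun i => oneLine π (i + 1) < oneLine π i)).image
    (fun i => oneLine π (i + 1))

/-- `Suc(π) = {π(i+1) : i ∈ {1,…,n-1}, π(i+1) = π(i)+1}` (value set). -/
def SucSet {n : ℕ} (π : Equiv.Perm (Fin n)) : Finset ℕ :=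
  ((Finset.Icc 1 (n - 1)).filter (fun i => oneLine π (i + 1) = oneLine π i + 1)).image
    (fun i => oneLine π (i + 1))

/-- `Aexc(π) = {π(i) : i ∈ {2,…,n}, π(i) < i}` (value set). -/
def Aexc {n : ℕ} (π : Equiv.Perm (Fin n)) : Finset ℕ :=
  ((Finset.Icc 2 n).filter (fun i => oneLine π i < i)).image (fun i => oneLine π i)

/-- `Êxc(π) = {π(i) : i ∈ {2,…,n}, π(i) > i}` (value set). -/
def ExcHat {n : ℕ} (π : Equiv.Perm (Fin n)) : Finset ℕ :=
  ((Finset.Icc 2 n).filter (fun i => i < oneLine π i)).image (fun i => oneLine π i)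

/-- `F̂ix(π) = {π(i) : i ∈ {2,…,n}, π(i) = i}` (value set). -/
def FixHat {n : ℕ} (π : Equiv.Perm (Fin n)) : Finset ℕ :=
  ((Finset.Icc 2 n).filter (fun i => oneLine π i = i)).image (fun i => oneLine π i)

/-- `depth(π) = ∑_{i : π(i) > i} (π(i) − i)`. -/
def depthStat {n : ℕ} (π : Equiv.Perm (Fin n)) : ℕ :=
  ∑ i ∈ (Finset.Icc 1 n).filter (fun i => i < oneLine π i), (oneLine π i - i)

/-- `drp(π) = ∑_{i ∈ {1,…,n-1} : π(i) > π(i+1)} (π(i) − π(i+1))`. -/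
def drpStat {n : ℕ} (π : Equiv.Perm (Fin n)) : ℕ :=
  ∑ i ∈ (Finset.Icc 1 (n - 1)).filter (fun i => oneLine π (i + 1) < oneLine π i),
    (oneLine π i - oneLine π (i + 1))

/-- `exc(π) = |{i ∈ {1,…,n} : π(i) > i}|`. -/
def excNum {n : ℕ} (π : Equiv.Perm (Fin n)) : ℕ :=
  ((Finset.Icc 1 n).filter (fun i => i < oneLine π i)).card

/-- `nexc(π) = |{i ∈ {1,…,n} : π(i) < i}|`. -/
def nexcNum {n : ℕ} (π : Equiv.Perm (Fin n)) : ℕ :=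
  ((Finset.Icc 1 n).filter (fun i => oneLine π i < i)).card

/-- `des(π) = |{i ∈ {1,…,n-1} : π(i) > π(i+1)}|`. -/
def desNum {n : ℕ} (π : Equiv.Perm (Fin n)) : ℕ :=
  ((Finset.Icc 1 (n - 1)).filter (fun i => oneLine π (i + 1) < oneLine π i)).card

/-- `asc(π) = |{i ∈ {1,…,n-1} : π(i) < π(i+1)}|`. -/
def ascNum {n : ℕ} (π : Equiv.Perm (Fin n)) : ℕ :=
  ((Finset.Icc 1 (n - 1)).filter (fun i => oneLine π i < oneLine π (i + 1))).card

/-- `inv(π) = |{(i,j) : 1 ≤ i < j ≤ n, π(i) > π(j)}|`. -/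
def invNum {n : ℕ} (π : Equiv.Perm (Fin n)) : ℕ :=
  (((Finset.Icc 1 n) ×ˢ (Finset.Icc 1 n)).filter
    (fun p : ℕ × ℕ => p.1 < p.2 ∧ oneLine π p.2 < oneLine π p.1)).card

/-- The sum of the drops `a - b` over the consecutive entries `a, b` of a word. -/
def wordDrop : List ℕ → ℕ
  | [] => 0
  | [_] => 0
  | a :: b :: t => (a - b) + wordDrop (b :: t)

/-- The multiset of the minima of consecutive entries of a word followed by infinity. -/
def wordMins : List ℕ → Multiset ℕ
  | [] => 0
  | [a] => {a}
  | a :: b :: t => min a b ::ₘ wordMins (b :: t)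

/-- The total excess `∑ (e i - i)` over the exceedances of a permutation. -/
def excSum {m : ℕ} (e : Equiv.Perm (Fin m)) : ℕ := ∑ i, ((e i : ℕ) - i)

/-- The multiset of the values `min (e i) i`. -/
def permMins {m : ℕ} (e : Equiv.Perm (Fin m)) : Multiset ℕ :=
  (univ : Finset (Fin m)).val.map fun i => min (e i : ℕ) i

/-- The one-line notation of a permutation of `{0, …, m - 1}`. -/
def word {m : ℕ} (e : Equiv.Perm (Fin m)) : List ℕ := List.ofFn fun i => (e i : ℕ)

/-- The effect on a function of a sum statistic and a multiset statistic of inserting a new least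
value in all possible ways. -/
def insertMin (G : ℕ → Multiset ℕ → ℤ) (d : ℕ) (M : Multiset ℕ) : ℤ :=
  G d (0 ::ₘ M) + (M.map fun c => G (d + c) (0 ::ₘ 0 ::ₘ M.erase c)).sum

theorem sum_permutations'Aux_zero (G : ℕ → Multiset ℕ → ℤ) (L : List ℕ) :
    ((List.permutations'Aux 0 L).map fun l => G (wordDrop l) (wordMins l)).sum =
      insertMin G (wordDrop L) (wordMins L) := by
  induction L generalizing G with
  | nil => simp [List.permutations'Aux, wordDrop, wordMins, insertMin]
  | cons a t ih =>
    cases t with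
    | nil => simp [List.permutations'Aux, wordDrop, wordMins, insertMin]
    | cons b t =>
      have key := ih (fun d M => G ((a - b) + d) (min a b ::ₘ M))
      simp only [List.permutations'Aux, List.map_cons, List.sum_cons, List.map_map,
        Function.comp_def, wordDrop, wordMins, insertMin] at key ⊢
      simp only [Nat.zero_min, Nat.zero_sub, Nat.zero_add, Nat.min_zero, Nat.sub_zero,
        Multiset.map_cons, Multiset.sum_cons, Multiset.erase_cons_head] at key ⊢
      have h1 : a - b + wordDrop (b :: t) + min a b = a + wordDrop (b :: t) := by omega
      have h2 : ∀ c ∈ wordMins (b :: t),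
          G (a - b + wordDrop (b :: t) + c)
            (0 ::ₘ 0 ::ₘ (min a b ::ₘ wordMins (b :: t)).erase c) =
          G (a - b + (wordDrop (b :: t) + c))
            (min a b ::ₘ 0 ::ₘ 0 ::ₘ (wordMins (b :: t)).erase c) := by
        intro c hc
        rw [Multiset.erase_cons_tail_of_mem hc, add_assoc, Multiset.cons_swap (min a b) 0,
          Multiset.cons_swap (min a b) 0]
      rw [Multiset.map_congr rfl h2, h1]
      rw [Multiset.cons_swap (min a b) 0] at key
      linarith

theorem wordDrop_map_succ (L : List ℕ) : wordDrop (L.map Nat.succ) = wordDrop L := by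
  induction L with
  | nil => rfl
  | cons a t ih =>
    cases t with
    | nil => rfl
    | cons b t =>
      simp only [List.map_cons, wordDrop] at ih ⊢
      rw [ih]
      omega

theorem wordMins_map_succ (L : List ℕ) :
    wordMins (L.map Nat.succ) = (wordMins L).map Nat.succ := by
  induction L with
  | nil => rfl
  | cons a t ih =>
    cases t with
    | nil => rfl
    | cons b t =>
      simp only [List.map_cons, wordMins, Multiset.map_cons] at ih ⊢
      rw [ih, Nat.succ_min_succ]

theorem sum_permutations'_range_succ (G : ℕ → Multiset ℕ → ℤ) (m : ℕ) :
    ((List.range (m + 1)).permutations'.map fun l => G (wordDrop l) (wordMins l)).sum =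
      ((List.range m).permutations'.map fun l =>
        insertMin G (wordDrop l) ((wordMins l).map Nat.succ)).sum := by
  rw [List.range_succ_eq_map, List.permutations', ← List.map_permutations', List.flatMap_map,
    List.map_flatMap, List.flatMap_def, List.sum_flatten, List.map_map]
  simp only [Function.comp_def]
  simp_rw [sum_permutations'Aux_zero, wordDrop_map_succ, wordMins_map_succ]

theorem sum_perm_fin_succ {m : ℕ} (F : Equiv.Perm (Fin (m + 1)) → ℤ) :
    ∑ w, F w = ∑ e : Equiv.Perm (Fin m), (F (Equiv.Perm.decomposeFin.symm (0, e)) +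
      ∑ i, F (Equiv.Perm.decomposeFin.symm ((e i).succ, e))) := by
  rw [← Equiv.Perm.decomposeFin.symm.sum_comp F, Fintype.sum_prod_type_right]
  refine Finset.sum_congr rfl fun e _ => ?_
  rw [Fin.sum_univ_succ, Equiv.sum_comp e fun j => F (Equiv.Perm.decomposeFin.symm (j.succ, e))]

theorem excSum_decomposeFin_zero {m : ℕ} (e : Equiv.Perm (Fin m)) :
    excSum (Equiv.Perm.decomposeFin.symm (0, e)) = excSum e := by
  simp [excSum, Fin.sum_univ_succ]

theorem permMins_decomposeFin_zero {m : ℕ} (e : Equiv.Perm (Fin m)) :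
    permMins (Equiv.Perm.decomposeFin.symm (0, e)) = 0 ::ₘ (permMins e).map Nat.succ := by
  simp [permMins, Fin.univ_succ, Function.comp_def]

theorem decomposeFin_symm_apply_succ_of_ne {m : ℕ} (e : Equiv.Perm (Fin m)) {i k : Fin m}
    (h : k ≠ i) : Equiv.Perm.decomposeFin.symm ((e i).succ, e) k.succ = (e k).succ := by
  rw [Equiv.Perm.decomposeFin_symm_apply_succ, Equiv.swap_apply_of_ne_of_ne (Fin.succ_ne_zero _)]
  simpa using h

theorem excSum_decomposeFin_succ {m : ℕ} (e : Equiv.Perm (Fin m)) (i : Fin m) :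
    excSum (Equiv.Perm.decomposeFin.symm ((e i).succ, e)) =
      excSum e + (min (e i : ℕ) i).succ := by
  have h : ∀ k ∈ univ.erase i,
      ((Equiv.Perm.decomposeFin.symm ((e i).succ, e) k.succ : ℕ) - (k.succ : ℕ)) =
        (e k : ℕ) - k := by
    intro k hk
    rw [decomposeFin_symm_apply_succ_of_ne e (ne_of_mem_erase hk)]
    simp
  rw [excSum, excSum, Fin.sum_univ_succ, ← add_sum_erase _ _ (mem_univ i), sum_congr rfl h,
    ← add_sum_erase _ _ (mem_univ i)]
  simp
  omega

theorem permMins_decomposeFin_succ {m : ℕ} (e : Equiv.Perm (Fin m)) (i : Fin m) :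
    permMins (Equiv.Perm.decomposeFin.symm ((e i).succ, e)) =
      0 ::ₘ 0 ::ₘ ((permMins e).map Nat.succ).erase (min (e i : ℕ) i).succ := by
  have hu : (univ : Finset (Fin m)).val = i ::ₘ (univ.erase i).val :=
    (Multiset.cons_erase (mem_univ i)).symm
  have h : ∀ k ∈ univ.erase i,
      min (Equiv.Perm.decomposeFin.symm ((e i).succ, e) k.succ : ℕ) (k.succ : ℕ) =
        (min (e k : ℕ) k).succ := by
    intro k hk
    rw [decomposeFin_symm_apply_succ_of_ne e (ne_of_mem_erase hk), Fin.val_succ, Fin.val_succ,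
      Nat.succ_min_succ]
  rw [permMins, permMins, Fin.univ_succ, cons_val, map_val, Multiset.map_cons, Multiset.map_map,
    hu]
  simp only [Multiset.map_cons, Multiset.map_map, Function.comp_def, Multiset.erase_cons_head,
    Function.Embedding.coeFn_mk]
  rw [← Multiset.map_congr (s := (univ.erase i).val) rfl h]
  simp

theorem sum_excSum_permMins (G : ℕ → Multiset ℕ → ℤ) (m : ℕ) :
    ∑ w : Equiv.Perm (Fin (m + 1)), G (excSum w) (permMins w) =
      ∑ e : Equiv.Perm (Fin m), insertMin G (excSum e) ((permMins e).map Nat.succ) := by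
  rw [sum_perm_fin_succ]
  refine Finset.sum_congr rfl fun e _ => ?_
  simp_rw [excSum_decomposeFin_zero, permMins_decomposeFin_zero, excSum_decomposeFin_succ,
    permMins_decomposeFin_succ, insertMin]
  congr 1
  conv_rhs => enter [1, 2]; rw [permMins, Multiset.map_map]
  rw [Multiset.map_map]
  rfl

theorem sum_excSum_permMins_eq_sum_permutations' (m : ℕ) (G : ℕ → Multiset ℕ → ℤ) :
    ∑ w : Equiv.Perm (Fin m), G (excSum w) (permMins w) =
      ((List.range m).permutations'.map fun l => G (wordDrop l) (wordMins l)).sum := by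
  induction m generalizing G with
  | zero => simp [excSum, permMins, wordDrop, wordMins]
  | succ m ih =>
    rw [sum_excSum_permMins, sum_permutations'_range_succ,
      ih fun d M => insertMin G d (M.map Nat.succ)]

theorem word_injective (m : ℕ) : Function.Injective (word (m := m)) := by
  intro e f h
  ext i
  exact congrFun (List.ofFn_injective h) i

theorem map_word_univ (m : ℕ) :
    (univ : Finset (Equiv.Perm (Fin m))).val.map word = ↑((List.range m).permutations') := by
  have hnd : (((univ : Finset (Equiv.Perm (Fin m))).val).map word).Nodup :=
    univ.nodup.map (word_injective m)
  refine Multiset.eq_of_le_of_card_le ((Multiset.le_iff_subset hnd).2 fun l hl => ?_) ?_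
  · obtain ⟨e, -, rfl⟩ := Multiset.mem_map.1 hl
    rw [Multiset.mem_coe, List.mem_permutations']
    have h := Equiv.Perm.ofFn_comp_perm e fun i : Fin m => (i : ℕ)
    rwa [show (List.ofFn fun i : Fin m => (i : ℕ)) = List.range m from
      List.ext_getElem (by simp) (by simp)] at h
  · simp [← (List.permutations_perm_permutations' _).length_eq, List.length_permutations,
      Fintype.card_perm]

/-- Excess sum and drop sum are equidistributed over all permutations. -/
theorem sum_excSum_eq_sum_wordDrop (m : ℕ) (g : ℕ → ℤ) :
    ∑ w : Equiv.Perm (Fin m), g (excSum w) = ∑ w : Equiv.Perm (Fin m), g (wordDrop (word w)) := by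
  rw [sum_excSum_permMins_eq_sum_permutations' m fun d _ => g d, ← Multiset.sum_coe,
    ← Multiset.map_coe, ← map_word_univ, Multiset.map_map]
  rfl

theorem wordDrop_eq_add_wordDrop_map_pred {L : List ℕ} (hL : L.Nodup) :
    wordDrop L = (if 0 ∈ L.tail then 1 else 0) + wordDrop (L.map Nat.pred) := by
  induction L with
  | nil => rfl
  | cons a t ih =>
    cases t with
    | nil => rfl
    | cons b t =>
      have key := ih hL.of_cons
      simp only [List.map_cons, wordDrop, List.tail_cons, List.nodup_cons, List.mem_cons] at *
      rw [key]
      rcases Nat.eq_zero_or_pos b with rfl | hb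
      · have : a ≠ 0 := fun h => hL.1 (Or.inl h)
        simp [hL.2.1]
        omega
      · by_cases h : 0 ∈ t <;> simp [h, hb.ne] <;> omega

theorem wordDrop_zero_cons (L : List ℕ) : wordDrop (0 :: L) = wordDrop L := by
  cases L <;> simp [wordDrop]

theorem word_decomposeFin_zero {m : ℕ} (e : Equiv.Perm (Fin m)) :
    word (Equiv.Perm.decomposeFin.symm (0, e)) = 0 :: (word e).map Nat.succ := by
  simp [word, List.ofFn_succ, List.map_ofFn, Function.comp_def]

theorem wordDrop_word_decomposeFin_zero {m : ℕ} (e : Equiv.Perm (Fin m)) :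
    wordDrop (word (Equiv.Perm.decomposeFin.symm (0, e))) = wordDrop (word e) := by
  rw [word_decomposeFin_zero, wordDrop_zero_cons, wordDrop_map_succ]

theorem zero_mem_tail_word {m : ℕ} (w : Equiv.Perm (Fin (m + 1))) :
    0 ∈ (word w).tail ↔ w 0 ≠ 0 := by
  rw [word, List.ofFn_succ, List.tail_cons, List.mem_ofFn']
  constructor
  · rintro ⟨i, hi⟩ h
    have h' : w i.succ = 0 := Fin.ext hi
    exact Fin.succ_ne_zero i (w.injective (h'.trans h.symm))
  · intro h
    have hne : w.symm 0 ≠ 0 := fun h' => h (by rw [← h', Equiv.apply_symm_apply, h'])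
    obtain ⟨i, hi⟩ := Fin.exists_succ_eq.2 hne
    exact ⟨i, by simp [hi]⟩

theorem pred_swap_zero_one {m : ℕ} (x : Fin (m + 2)) :
    ((Equiv.swap 0 1 x : Fin (m + 2)) : ℕ).pred = (x : ℕ).pred := by
  rw [Equiv.swap_apply_def]
  split_ifs with h0 h1 <;> simp [*]

theorem wordDrop_word_swap_zero_one_mul {m : ℕ} (w : Equiv.Perm (Fin (m + 2))) :
    wordDrop (word (Equiv.swap 0 1 * w)) + (if (Equiv.swap 0 1 * w : Equiv.Perm _) 0 = 0 then 1 else 0) =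
      wordDrop (word w) + (if w 0 = 0 then 1 else 0) := by
  have hword (v : Equiv.Perm (Fin (m + 2))) :
      wordDrop (word v) + (if v 0 = 0 then 1 else 0) =
        1 + wordDrop ((word v).map Nat.pred) := by
    have hnd : (word v).Nodup := List.nodup_ofFn.2 (Fin.val_injective.comp v.injective)
    rw [wordDrop_eq_add_wordDrop_map_pred hnd]
    simp only [zero_mem_tail_word]
    split_ifs <;> omega
  rw [hword, hword]
  simp [word, List.map_ofFn, Function.comp_def, -Nat.pred_eq_sub_one, pred_swap_zero_one]

theorem excSum_swap_zero_one_mul {m : ℕ} (w : Equiv.Perm (Fin (m + 2))) :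
    excSum (Equiv.swap 0 1 * w) + (if (Equiv.swap 0 1 * w : Equiv.Perm _) 0 = 0 then 1 else 0) =
      excSum w + (if w 0 = 0 then 1 else 0) := by
  have hexc (v : Equiv.Perm (Fin (m + 2))) :
      excSum v + (if v 0 = 0 then 1 else 0) =
        1 + ((v 0 : ℕ).pred + ∑ i : Fin (m + 1), ((v i.succ : ℕ).pred - i)) := by
    have h (i : Fin (m + 1)) : (v i.succ : ℕ) - (i.succ : ℕ) = (v i.succ : ℕ).pred - i := by
      simp only [Fin.val_succ, Nat.pred_eq_sub_one]
      omega
    rw [excSum, Fin.sum_univ_succ]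
    simp_rw [h, ← Fin.val_eq_zero_iff]
    simp only [Fin.val_zero, Nat.pred_eq_sub_one]
    split_ifs <;> omega
  rw [hexc, hexc]
  simp only [Equiv.Perm.mul_apply, pred_swap_zero_one]

theorem sum_sign_mul_eq {m : ℕ} (S : Equiv.Perm (Fin (m + 2)) → ℕ)
    (hS : ∀ w, S (Equiv.swap 0 1 * w) + (if (Equiv.swap 0 1 * w : Equiv.Perm _) 0 = 0 then 1 else 0) =
      S w + (if w 0 = 0 then 1 else 0)) (g : ℕ → ℤ) :
    ∑ w, (Equiv.Perm.sign w : ℤ) * g (S w) =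
      ∑ e : Equiv.Perm (Fin (m + 1)), (Equiv.Perm.sign e : ℤ) *
        (g (S (Equiv.Perm.decomposeFin.symm (0, e))) -
          g (S (Equiv.Perm.decomposeFin.symm (0, e)) + 1)) := by
  have hsplit (w : Equiv.Perm (Fin (m + 2))) : (Equiv.Perm.sign w : ℤ) * g (S w) =
      (Equiv.Perm.sign w : ℤ) * g (S w + (if w 0 = 0 then 1 else 0)) +
        (if w 0 = 0 then (Equiv.Perm.sign w : ℤ) * (g (S w) - g (S w + 1)) else 0) := by
    split_ifs
    · ring
    · simp
  have hzero : ∑ w : Equiv.Perm (Fin (m + 2)),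
      (Equiv.Perm.sign w : ℤ) * g (S w + (if w 0 = 0 then 1 else 0)) = 0 := by
    have h := Equiv.sum_comp (Equiv.mulLeft (Equiv.swap (0 : Fin (m + 2)) 1))
      fun w => (Equiv.Perm.sign w : ℤ) * g (S w + (if w 0 = 0 then 1 else 0))
    have h' (w : Equiv.Perm (Fin (m + 2))) :
        (Equiv.Perm.sign (Equiv.swap 0 1 * w) : ℤ) * g (S (Equiv.swap 0 1 * w) +
          (if (Equiv.swap 0 1 * w : Equiv.Perm _) 0 = 0 then 1 else 0)) =
        -((Equiv.Perm.sign w : ℤ) * g (S w + (if w 0 = 0 then 1 else 0))) := by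
      rw [hS, Equiv.Perm.sign_mul, Equiv.Perm.sign_swap Fin.zero_ne_one]
      simp
    replace h := (sum_congr rfl fun w _ => h' w).symm.trans h
    rw [sum_neg_distrib] at h
    linarith
  rw [sum_congr rfl fun w _ => hsplit w, sum_add_distrib, hzero, zero_add, sum_perm_fin_succ]
  refine sum_congr rfl fun e _ => ?_
  simp [Fin.succ_ne_zero, Equiv.Perm.decomposeFin.symm_sign]

theorem sum_sign_mul_excSum_eq (m : ℕ) (g : ℕ → ℤ) :
    ∑ w : Equiv.Perm (Fin (m + 1)), (Equiv.Perm.sign w : ℤ) * g (excSum w) =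
      ∑ w : Equiv.Perm (Fin (m + 1)), (Equiv.Perm.sign w : ℤ) * g (wordDrop (word w)) := by
  induction m generalizing g with
  | zero => simp [excSum, word, wordDrop]
  | succ m ih =>
    rw [sum_sign_mul_eq excSum excSum_swap_zero_one_mul,
      sum_sign_mul_eq (fun w => wordDrop (word w)) wordDrop_word_swap_zero_one_mul]
    simp_rw [excSum_decomposeFin_zero, wordDrop_word_decomposeFin_zero]
    exact ih fun k => g k - g (k + 1)

theorem decomposeFin_symm_one {m : ℕ} (e : Equiv.Perm (Fin (m + 1))) :
    Equiv.Perm.decomposeFin.symm (1, e) =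
      Equiv.swap 0 1 * Equiv.Perm.decomposeFin.symm (0, e) := by
  ext i
  refine Fin.cases ?_ (fun i => ?_) i <;> simp

theorem excSum_decomposeFin_one {m : ℕ} (e : Equiv.Perm (Fin (m + 1))) :
    excSum (Equiv.Perm.decomposeFin.symm (1, e)) = excSum e + 1 := by
  have h := excSum_swap_zero_one_mul (Equiv.Perm.decomposeFin.symm (0, e))
  rw [← decomposeFin_symm_one, excSum_decomposeFin_zero] at h
  simpa using h

theorem wordDrop_word_decomposeFin_one {m : ℕ} (e : Equiv.Perm (Fin (m + 1))) :
    wordDrop (word (Equiv.Perm.decomposeFin.symm (1, e))) = wordDrop (word e) + 1 := by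
  have h := wordDrop_word_swap_zero_one_mul (Equiv.Perm.decomposeFin.symm (0, e))
  rw [← decomposeFin_symm_one, wordDrop_word_decomposeFin_zero] at h
  simpa using h

/-- Excess sum and drop sum are equidistributed on each of the two sign classes. -/
theorem card_sign_excSum_eq (m : ℕ) (s : ℤˣ) (k : ℕ) :
    #{e : Equiv.Perm (Fin (m + 1)) | (Equiv.Perm.sign e, excSum e) = (s, k)} =
      #{e : Equiv.Perm (Fin (m + 1)) | (Equiv.Perm.sign e, wordDrop (word e)) = (s, k)} := by
  have key (S : Equiv.Perm (Fin (m + 1)) → ℕ) :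
      2 * (#{e : Equiv.Perm (Fin (m + 1)) | (Equiv.Perm.sign e, S e) = (s, k)} : ℤ) =
        ∑ e, (if S e = k then 1 else 0) +
          s * ∑ e, (Equiv.Perm.sign e : ℤ) * (if S e = k then 1 else 0) := by
    rw [card_filter, Nat.cast_sum, mul_sum, mul_sum, ← sum_add_distrib]
    refine sum_congr rfl fun e _ => ?_
    rcases Int.units_eq_one_or s with rfl | rfl <;>
      rcases Int.units_eq_one_or (Equiv.Perm.sign e) with h | h <;>
      by_cases hk : S e = k <;> simp [h, hk]
  have h := (key excSum).trans (Eq.trans ?_ (key fun e => wordDrop (word e)).symm)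
  · exact_mod_cast mul_left_cancel₀ two_ne_zero h
  · rw [sum_excSum_eq_sum_wordDrop _ fun d => if d = k then 1 else 0,
      sum_sign_mul_excSum_eq _ fun d => if d = k then 1 else 0]

theorem exists_perm_sign_excSum (m : ℕ) :
    ∃ Φ : Equiv.Perm (Fin (m + 1)) ≃ Equiv.Perm (Fin (m + 1)), ∀ e,
      Equiv.Perm.sign (Φ e) = Equiv.Perm.sign e ∧ excSum e = wordDrop (word (Φ e)) := by
  have hfib (c : ℤˣ × ℕ) : Nonempty
      ({e : Equiv.Perm (Fin (m + 1)) // (Equiv.Perm.sign e, excSum e) = c} ≃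
        {e : Equiv.Perm (Fin (m + 1)) // (Equiv.Perm.sign e, wordDrop (word e)) = c}) := by
    rw [← Fintype.card_eq, Fintype.card_subtype, Fintype.card_subtype]
    exact card_sign_excSum_eq m c.1 c.2
  refine ⟨Equiv.ofFiberEquiv fun c => (hfib c).some, fun e => ?_⟩
  have h := Prod.ext_iff.1 (Equiv.ofFiberEquiv_map (fun c => (hfib c).some) e)
  exact ⟨h.1, h.2.symm⟩

theorem oneLine_succ {n : ℕ} (π : Equiv.Perm (Fin n)) (i : Fin n) :
    oneLine π (i + 1) = π i + 1 := by
  simp [oneLine]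

@[to_additive]
theorem prod_Icc_eq_prod_fin {M : Type*} [CommMonoid M] (n : ℕ) (f : ℕ → M) :
    ∏ i ∈ Icc 1 n, f i = ∏ i : Fin n, f (i + 1) := by
  rw [Fin.prod_univ_eq_prod_range fun i => f (i + 1), range_eq_Ico, prod_Ico_add' f 0 n 1]
  rfl

theorem depthStat_eq_excSum {n : ℕ} (π : Equiv.Perm (Fin n)) : depthStat π = excSum π := by
  rw [depthStat, sum_filter, sum_Icc_eq_sum_fin, excSum]
  refine sum_congr rfl fun i _ => ?_
  rw [oneLine_succ]
  split_ifs <;> omega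

theorem wordDrop_ofFn (m : ℕ) (f : Fin (m + 1) → ℕ) :
    wordDrop (List.ofFn f) = ∑ i : Fin m, (f i.castSucc - f i.succ) := by
  induction m with
  | zero => simp [wordDrop]
  | succ m ih =>
    have h := ih fun i => f i.succ
    rw [List.ofFn_succ] at h
    rw [List.ofFn_succ, List.ofFn_succ, wordDrop, h, Fin.sum_univ_succ]
    rfl

theorem drpStat_eq_wordDrop {m : ℕ} (π : Equiv.Perm (Fin (m + 1))) :
    drpStat π = wordDrop (word π) := by
  rw [drpStat, sum_filter, Nat.add_sub_cancel, sum_Icc_eq_sum_fin, word, wordDrop_ofFn]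
  refine sum_congr rfl fun i _ => ?_
  have h1 := oneLine_succ π i.castSucc
  have h2 := oneLine_succ π i.succ
  rw [Fin.val_castSucc] at h1
  rw [Fin.val_succ] at h2
  rw [h1, h2]
  split_ifs <;> omega

theorem neg_one_pow_invNum {n : ℕ} (π : Equiv.Perm (Fin n)) :
    (-1 : ℤ) ^ invNum π = Equiv.Perm.sign π := by
  rw [invNum, ← prod_const, prod_filter, prod_product_right, Equiv.Perm.sign_eq_prod_prod_Iio,
    prod_Icc_eq_prod_fin, Units.coe_prod]
  refine prod_congr rfl fun j _ => ?_
  rw [prod_Icc_eq_prod_fin, Units.coe_prod, ← filter_gt_eq_Iio, prod_filter]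
  refine prod_congr rfl fun i _ => ?_
  simp only [oneLine_succ, add_lt_add_iff_right, Fin.val_fin_lt]
  by_cases hij : i < j
  · rcases lt_or_gt_of_ne (π.injective.ne hij.ne) with h | h <;> simp [hij, h, h.not_gt]
  · simp [hij]

/-- on A₂ = {w : w(1) = 2} there is a sign-preserving bijection
carrying depth to drp. -/
theorem stmt14 (n : ℕ) (hn : 2 ≤ n) :
    ∃ Ψ : {w : Equiv.Perm (Fin n) // oneLine w 1 = 2} →
          {w : Equiv.Perm (Fin n) // oneLine w 1 = 2},
      Function.Bijective Ψ ∧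
        ∀ w : {w : Equiv.Perm (Fin n) // oneLine w 1 = 2},
          ((-1 : ℤ) ^ invNum (Ψ w).1 = (-1 : ℤ) ^ invNum w.1) ∧
          depthStat w.1 = drpStat (Ψ w).1 := by
  obtain ⟨m, rfl⟩ := Nat.exists_eq_add_of_le' hn
  obtain ⟨Φ, hΦ⟩ := exists_perm_sign_excSum m
  have hmem (w : Equiv.Perm (Fin (m + 2))) : oneLine w 1 = 2 ↔ w 0 = 1 := by
    have h := oneLine_succ w 0
    rw [Fin.val_zero, zero_add] at h
    rw [h, Fin.ext_iff, Fin.val_one]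
    omega
  let ι : Equiv.Perm (Fin (m + 1)) ≃ {w : Equiv.Perm (Fin (m + 2)) // oneLine w 1 = 2} :=
    Equiv.ofBijective
      (fun e => ⟨Equiv.Perm.decomposeFin.symm (1, e), by simp [hmem]⟩)
      ⟨fun e f h => by simpa using congrArg Subtype.val h, fun ⟨w, hw⟩ => by
        obtain ⟨⟨p, e⟩, rfl⟩ := Equiv.Perm.decomposeFin.symm.surjective w
        rw [hmem, Equiv.Perm.decomposeFin_symm_apply_zero] at hw
        subst hw
        exact ⟨e, rfl⟩⟩
  refine ⟨(ι.symm.trans Φ).trans ι, Equiv.bijective _, fun w => ?_⟩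
  obtain ⟨e, rfl⟩ := ι.surjective w
  have hι (e) : (ι e).1 = Equiv.Perm.decomposeFin.symm (1, e) := rfl
  rw [neg_one_pow_invNum, neg_one_pow_invNum, depthStat_eq_excSum, drpStat_eq_wordDrop,
    Equiv.trans_apply, Equiv.trans_apply, Equiv.symm_apply_apply, hι, hι,
    Equiv.Perm.decomposeFin.symm_sign, Equiv.Perm.decomposeFin.symm_sign, (hΦ e).1,
    excSum_decomposeFin_one, wordDrop_word_decomposeFin_one, (hΦ e).2]
  exact ⟨rfl, rfl⟩
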